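/- Let (L₁, L₂, P, (⊛ᵢ, ↙ⁱ, ↖ᵢ)_{i∈I}) be a multi-adjoint property-oriented frame, (X, Y, φ, τ) a context of this frame, and φ*, φ_* the associated operators. The multi-adjoint property-oriented concept lattice K = { (μ, λ) ∈ (X → L₁) × (Y → L₂) ∣ φ* λ = μ and φ_* μ = λ }, ordered by (μ₁, λ₁) ≤ (μ₂, λ₂) ⇔ λ₁ ≤ λ₂ pointwise, is a complete lattice, and the second projection (μ, λ) ↦ λ is an order isomorphism from K onto the complete lattice Fix(φ_*∘φ*) = { λ : Y → L₂ ∣ φ_*(φ* λ) = λ } with the pointwise order. -/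

import Mathlib

/-- The multi-adjoint property-oriented concept lattice of a context: pairs
`(μ, lam)` with `φ* lam = μ` and `φ_* μ = lam`. -/
abbrev MAPropConceptLattice {L₁ L₂ : Type*} {X Y : Type*}
    (star : (Y → L₂) → X → L₁) (lstar : (X → L₁) → Y → L₂) : Type _ :=
  {p : (X → L₁) × (Y → L₂) // star p.2 = p.1 ∧ lstar p.1 = p.2}

/-- Concepts are ordered by comparing their second components (pointwise). -/
instance {L₁ L₂ : Type*} [Preorder L₂] {X Y : Type*}
    (star : (Y → L₂) → X → L₁) (lstar : (X → L₁) → Y → L₂) :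
    LE (MAPropConceptLattice star lstar) :=
  ⟨fun p q => p.1.2 ≤ q.1.2⟩

/-!
Concepts correspond to the fixed points of `lstar ∘ star`, since `(μ, lam)` is determined by `lam`.
By adjointness `star` and `lstar` form a Galois connection, so `lstar ∘ star` is monotone, and
Knaster–Tarski makes its fixed points a complete lattice.
-/

namespace MAPropConceptLattice

/-- The second projection, as an order isomorphism from concepts onto `Fix (φ_* ∘ φ*)`. -/
def sndOrderIso {L₁ L₂ X Y : Type*} [Preorder L₂]
    (star : (Y → L₂) → X → L₁) (lstar : (X → L₁) → Y → L₂) :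
    MAPropConceptLattice star lstar ≃o {lam : Y → L₂ // lstar (star lam) = lam} where
  toFun p := ⟨p.1.2, by rw [p.2.1, p.2.2]⟩
  invFun lam := ⟨(star lam, lam), rfl, lam.2⟩
  left_inv p := Subtype.ext (Prod.ext p.2.1 rfl)
  right_inv _ := rfl
  map_rel_iff' := Iff.rfl

end MAPropConceptLattice

theorem galoisConnection_iSup_iInf {X Y : Type*} {α : Y → Type*} {β : X → Type*}
    [∀ y, CompleteLattice (α y)] [∀ x, CompleteLattice (β x)]
    {l : ∀ x y, α y → β x} {u : ∀ x y, β x → α y}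
    (gc : ∀ x y, GaloisConnection (l x y) (u x y)) :
    GaloisConnection (fun (a : ∀ y, α y) x => ⨆ y, l x y (a y))
      (fun (b : ∀ x, β x) y => ⨅ x, u x y (b x)) := by
  intro a b
  calc (∀ x, ⨆ y, l x y (a y) ≤ b x)
      ↔ ∀ x y, l x y (a y) ≤ b x := forall_congr' fun _ => iSup_le_iff
    _ ↔ ∀ y x, l x y (a y) ≤ b x := forall_comm
    _ ↔ ∀ y x, a y ≤ u x y (b x) := forall₂_congr fun y x => gc x y (a y) (b x)
    _ ↔ ∀ y, a y ≤ ⨅ x, u x y (b x) := forall_congr' fun _ => le_iInf_iff.symm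

theorem stmt_12_general {L₁ L₂ X Y : Type*} [CompleteLattice L₂]
    {star : (Y → L₂) → X → L₁} {lstar : (X → L₁) → Y → L₂} (mono : Monotone (lstar ∘ star)) :
    (∃ inst : CompleteLattice (MAPropConceptLattice star lstar),
      ∀ p q : MAPropConceptLattice star lstar, inst.le p q ↔ p ≤ q) ∧
    (∃ e : MAPropConceptLattice star lstar ≃o {lam : Y → L₂ // lstar (star lam) = lam},
      ∀ p : MAPropConceptLattice star lstar, (e p : Y → L₂) = p.1.2) := by
  let e := MAPropConceptLattice.sndOrderIso star lstar
  let knasterTarski : CompleteLattice {lam : Y → L₂ // lstar (star lam) = lam} :=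
    fixedPoints.completeLattice ⟨lstar ∘ star, mono⟩
  exact ⟨⟨e.toEquiv.completeLattice, fun _ _ => e.le_iff_le⟩, e, fun _ => rfl⟩

/-- The multi-adjoint property-oriented concept lattice, ordered
by second components, is a complete lattice, and the second projection is an
order isomorphism onto the fixed points of `φ_* ∘ φ*` with the pointwise
order. -/
theorem stmt_12 {L₁ L₂ P : Type*} [CompleteLattice L₁] [CompleteLattice L₂]
    [CompleteLattice P] {I : Type*}
    (w : I → P → L₂ → L₁) (ld : I → L₁ → L₂ → P) (lu : I → L₁ → P → L₂)
    (adj : ∀ (i : I) (z : P) (y : L₂) (x : L₁),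
      (w i z y ≤ x ↔ z ≤ ld i x y) ∧ (w i z y ≤ x ↔ y ≤ lu i x z))
    {X Y : Type*} (φ : X → Y → P) (τ : Y → I)
    (star : (Y → L₂) → X → L₁) (lstar : (X → L₁) → Y → L₂)
    (hstar : ∀ (lam : Y → L₂) (x : X), star lam x = ⨆ y, w (τ y) (φ x y) (lam y))
    (hlstar : ∀ (μ : X → L₁) (y : Y), lstar μ y = ⨅ x, lu (τ y) (μ x) (φ x y)) :
    -- the concept lattice is a complete lattice whose order is the one above
    (∃ inst : CompleteLattice (MAPropConceptLattice star lstar),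
      ∀ p q : MAPropConceptLattice star lstar, inst.le p q ↔ p ≤ q) ∧
    -- the second projection is an order isomorphism onto `Fix (φ_* ∘ φ*)`
    (∃ e : MAPropConceptLattice star lstar ≃o {lam : Y → L₂ // lstar (star lam) = lam},
      ∀ p : MAPropConceptLattice star lstar, (e p : Y → L₂) = p.1.2) := by
  have gc : GaloisConnection star lstar := by
    rw [funext₂ hstar, funext₂ hlstar]
    exact galoisConnection_iSup_iInf fun x y a b => (adj (τ y) (φ x y) a b).2
  exact stmt_12_general (gc.monotone_u.comp gc.monotone_l)
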